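/- Let (Δ, M) be a uniform boundary pair with M connected and not homeomorphic to the circle S¹, and assume the action of Δ on M is minimal (every orbit is dense; this is automatic for uniform boundary pairs). Then there exists a point z ∈ M such that the set X(z) = {w ∈ M : w ≠ z and M ∖ {z, w} is connected} is dense in M. -/

import Mathlib

open Filter Topology Matrix

noncomputable instance projectivizationTopology
    {K V : Type*} [DivisionRing K] [AddCommGroup V] [Module K V] [TopologicalSpace V] :
    TopologicalSpace (Projectivization K V) :=
  inferInstanceAs (TopologicalSpace (Quotient _))

/-- `g n • z → a` locally uniformly on `M ∖ {b}`. -/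
def ConvLocUnif {Γ M : Type} [SMul Γ M] [TopologicalSpace M]
    (g : ℕ → Γ) (a b : M) : Prop :=
  ∀ K : Set M, IsCompact K → b ∉ K →
    ∀ U ∈ 𝓝 a, ∀ᶠ n in atTop, ∀ z ∈ K, g n • z ∈ U

/-- The action of `Γ` on `M` is an action by homeomorphisms with the convergence property. -/
def IsConvergenceAction (Γ M : Type) [Group Γ] [TopologicalSpace M] [MulAction Γ M] : Prop :=
  (∀ γ : Γ, Continuous fun x : M => γ • x) ∧
  ∀ g : ℕ → Γ, Function.Injective g →
    ∃ φ : ℕ → ℕ, StrictMono φ ∧ ∃ a b : M, ConvLocUnif (fun n => g (φ n)) a b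

def IsConicalLimitPoint (Γ : Type) {M : Type} [Group Γ] [TopologicalSpace M]
    [MulAction Γ M] (x : M) : Prop :=
  ∃ a b : M, a ≠ b ∧ ∃ g : ℕ → Γ,
    Tendsto (fun n => g n • x) atTop (𝓝 a) ∧
    ∀ y : M, y ≠ x → Tendsto (fun n => g n • y) atTop (𝓝 b)

def IsBoundedParabolicPoint (Γ : Type) {M : Type} [Group Γ] [TopologicalSpace M]
    [MulAction Γ M] (x : M) : Prop :=
  Infinite (MulAction.stabilizer Γ x) ∧
  (∀ y : M, (∀ γ ∈ MulAction.stabilizer Γ x, γ • y = y) → y = x) ∧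
  (∃ K : Set M, IsCompact K ∧ x ∉ K ∧
    ∀ y : M, y ≠ x → ∃ γ ∈ MulAction.stabilizer Γ x, γ • y ∈ K)

/-- `(Γ, M)` is a boundary pair: `Γ` is a finitely generated group acting as a geometrically
finite convergence group on the perfect compact metrizable space `M`. -/
structure IsBoundaryPair (Γ M : Type) [Group Γ] [TopologicalSpace M] [MulAction Γ M] : Prop where
  fg : Group.FG Γ
  compact : CompactSpace M
  metrizable : TopologicalSpace.MetrizableSpace M
  perfect : ∀ x : M, Filter.NeBot (𝓝[≠] x)
  conv : IsConvergenceAction Γ M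
  gf : ∀ x : M, IsConicalLimitPoint Γ x ∨
    (IsBoundedParabolicPoint Γ x ∧ Group.FG (MulAction.stabilizer Γ x))

/-- The unit circle `S¹`. -/
abbrev Circle1 : Type := Metric.sphere (0 : EuclideanSpace ℝ (Fin 2)) 1


section Helpers

variable {M : Type} [TopologicalSpace M]

theorem aux_sep {S : Set M} (hS : IsOpen S) (h : ¬ IsPreconnected S) :
    ∃ P Q : Set M, IsOpen P ∧ IsOpen Q ∧ P.Nonempty ∧ Q.Nonempty ∧ Disjoint P Q ∧ P ∪ Q = S := by
  unfold IsPreconnected at h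
  push Not at h
  obtain ⟨u, v, hu, hv, hc, h1, h2, h3⟩ := h
  refine ⟨S ∩ u, S ∩ v, hS.inter hu, hS.inter hv, h1, h2, ?_, ?_⟩
  · rw [Set.disjoint_left]
    rintro p ⟨hp, hpu⟩ ⟨_, hpv⟩
    have : p ∈ S ∩ (u ∩ v) := ⟨hp, hpu, hpv⟩
    rw [h3] at this
    exact this
  · rw [← Set.inter_union_distrib_left]
    exact Set.inter_eq_left.2 hc

/-- a preconnected set inside the union of two disjoint open sets lies in one of them -/
theorem aux_side {S P Q : Set M} (hS : IsPreconnected S) (hP : IsOpen P) (hQ : IsOpen Q)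
    (hd : Disjoint P Q) (hc : S ⊆ P ∪ Q) {x : M} (hx : x ∈ S) (hxP : x ∈ P) : S ⊆ P := by
  intro y hy
  rcases hc hy with h | h
  · exact h
  · obtain ⟨t, _, ht1, ht2⟩ := hS P Q hP hQ hc ⟨x, hx, hxP⟩ ⟨y, hy, h⟩
    exact (Set.disjoint_left.1 hd ht1 ht2).elim

theorem aux_add {S P Q : Set M} {w : M} (hS : IsPreconnected S) (hw : w ∈ S)
    (hP : IsOpen P) (hQ : IsOpen Q) (hd : Disjoint P Q) (hPQ : P ∪ Q = S \ {w}) :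
    IsPreconnected (P ∪ {w}) := by
  have key : ∀ u v : Set M, IsOpen u → IsOpen v → P ∪ {w} ⊆ u ∪ v → w ∈ u →
      ((P ∪ {w}) ∩ v).Nonempty → ((P ∪ {w}) ∩ (u ∩ v)).Nonempty := by
    rintro u v hu hv hc hwu ⟨p, hp, hpv⟩
    rcases hp with hp | hp
    swap
    · rw [Set.mem_singleton_iff] at hp
      subst hp
      exact ⟨p, Or.inr rfl, hwu, hpv⟩
    have hsub : S ⊆ (u ∪ Q) ∪ (v ∩ P) := by
      intro y hy
      by_cases hyw : y = w
      · subst hyw; exact Or.inl (Or.inl hwu)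
      · have : y ∈ P ∪ Q := by rw [hPQ]; exact ⟨hy, hyw⟩
        rcases this with h | h
        · rcases hc (Or.inl h) with h' | h'
          · exact Or.inl (Or.inl h')
          · exact Or.inr ⟨h', h⟩
        · exact Or.inl (Or.inr h)
    have hpS : p ∈ S := by
      have : p ∈ S \ {w} := by rw [← hPQ]; exact Or.inl hp
      exact this.1
    obtain ⟨t, _, ht1, ht2⟩ := hS (u ∪ Q) (v ∩ P) (hu.union hQ) (hv.inter hP) hsub
      ⟨w, hw, Or.inl hwu⟩ ⟨p, hpS, hpv, hp⟩
    rcases ht1 with h | h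
    · exact ⟨t, Or.inl ht2.2, h, ht2.1⟩
    · exact (Set.disjoint_left.1 hd ht2.2 h).elim
  intro u v hu hv hc h1 h2
  rcases hc (Or.inr rfl : w ∈ P ∪ {w}) with h | h
  · exact key u v hu hv hc h h2
  · rw [Set.inter_comm u v]
    exact key v u hv hu (by rwa [Set.union_comm v u]) h h1

/-- `P`, `Q` are the two sides of a separation of `M ∖ {z, w}`. -/
structure CutSep (z w : M) (P Q : Set M) : Prop where
  oP : IsOpen P
  oQ : IsOpen Q
  nP : P.Nonempty
  nQ : Q.Nonempty
  dis : Disjoint P Q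
  un : P ∪ Q = {z, w}ᶜ

theorem CutSep.symm {z w : M} {P Q : Set M} (h : CutSep z w P Q) : CutSep z w Q P :=
  ⟨h.oQ, h.oP, h.nQ, h.nP, h.dis.symm, by rw [Set.union_comm]; exact h.un⟩

theorem CutSep.swap {z w : M} {P Q : Set M} (h : CutSep z w P Q) : CutSep w z P Q :=
  ⟨h.oP, h.oQ, h.nP, h.nQ, h.dis, by rw [h.un, Set.pair_comm]⟩

theorem CutSep.mem {z w : M} {P Q : Set M} (h : CutSep z w P Q) {p : M} (h1 : p ≠ z) (h2 : p ≠ w) :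
    p ∈ P ∨ p ∈ Q := by
  have : p ∈ P ∪ Q := by rw [h.un]; simp [h1, h2]
  exact this

theorem CutSep.ne {z w : M} {P Q : Set M} (h : CutSep z w P Q) {p : M} (hp : p ∈ P) :
    p ≠ z ∧ p ≠ w := by
  have : p ∈ ({z, w} : Set M)ᶜ := by rw [← h.un]; exact Or.inl hp
  simpa [not_or] using this

theorem CutSep.nmem {z w : M} {P Q : Set M} (h : CutSep z w P Q) {p : M} (hp : p ∈ P) : p ∉ Q :=
  Set.disjoint_left.1 h.dis hp

theorem aux_cut [T1Space M] {z w : M} (h : ¬ IsPreconnected ({z, w}ᶜ : Set M)) :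
    ∃ P Q, CutSep z w P Q := by
  obtain ⟨P, Q, a, b, c, d, e, f⟩ :=
    aux_sep (S := ({z, w}ᶜ : Set M)) (Set.toFinite _).isClosed.isOpen_compl h
  exact ⟨P, Q, a, b, c, d, e, f⟩

theorem CutSep.conn {z w : M} {P Q : Set M} (h : CutSep z w P Q) (hzw : z ≠ w)
    (hz : IsPreconnected ({z}ᶜ : Set M)) : IsPreconnected (P ∪ {w}) := by
  refine aux_add hz (w := w) (by simpa using hzw.symm) h.oP h.oQ h.dis ?_
  rw [h.un]
  ext p
  simp [not_or]

theorem CutSep.conn2 {z w : M} {P Q : Set M} (h : CutSep z w P Q) (hzw : z ≠ w)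
    (hz : IsPreconnected ({z}ᶜ : Set M)) (hw : IsPreconnected ({w}ᶜ : Set M)) :
    IsPreconnected (P ∪ {z, w}) := by
  have h1 := h.conn hzw hz
  have h2 := h.swap.conn hzw.symm hw
  obtain ⟨p, hp⟩ := h.nP
  have := h1.union p (Or.inl hp) (Or.inl hp) h2
  convert this using 1
  ext q
  simp

/-- crossing lemma -/
theorem CutSep.cross (hnc : ∀ x : M, IsPreconnected ({x}ᶜ : Set M)) {a x : M} {P Q : Set M}
    (h : CutSep a x P Q) {y b : M} {X A : Set M}
    (h' : CutSep b y A X) (hy : y ∈ P) (hb : b ∈ Q) (ha : a ∈ A) : x ∈ X := by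
  have hyb : y ≠ b := by rintro rfl; exact h.nmem hy hb
  by_contra hx
  have hxA : x ∈ A := by
    refine (h'.mem ?_ ?_).resolve_right hx
    · rintro rfl; exact (h.symm.ne hb).2 rfl
    · rintro rfl; exact (h.ne hy).2 rfl
  have hc := h'.symm.conn2 hyb.symm (hnc _) (hnc _)
  have hsub : X ∪ {b, y} ⊆ P ∪ Q := by
    rw [h.un]
    rintro p hp
    simp only [Set.mem_compl_iff, Set.mem_insert_iff, Set.mem_singleton_iff, not_or]
    rcases hp with hp | hp | hp
    · constructor
      · rintro rfl; exact h'.nmem ha hp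
      · rintro rfl; exact h'.nmem hxA hp
    · subst hp; exact h.symm.ne hb
    · rw [Set.mem_singleton_iff] at hp
      subst hp; exact h.ne hy
  have := aux_side hc h.oP h.oQ h.dis hsub (x := y) (by simp) hy (show b ∈ X ∪ {b, y} by simp)
  exact h.nmem this hb

theorem aux_allcut (hnc : ∀ x : M, IsPreconnected ({x}ᶜ : Set M)) [T1Space M]
    (hpf : ∀ x y : M, (({x, y}ᶜ : Set M)).Nonempty)
    (F : ∀ N : Set M, IsOpen N → N.Nonempty → ∃ z ∈ N, ∀ w, w ∉ N →
      ¬ IsPreconnected ({z, w}ᶜ : Set M)) (x y : M) (hxy : x ≠ y) :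
    ∃ P Q, CutSep x y P Q := by
  obtain ⟨a, ha, haw⟩ := F _ (Set.toFinite {x, y}).isClosed.isOpen_compl (hpf x y)
  obtain ⟨hax, hay⟩ : a ≠ x ∧ a ≠ y := by simpa [not_or] using ha
  obtain ⟨P, Q, hPQ, hy⟩ : ∃ P Q, CutSep a x P Q ∧ y ∈ P := by
    obtain ⟨P, Q, h⟩ := aux_cut (haw x (by simp))
    rcases h.mem hay.symm hxy.symm with h1 | h1
    · exact ⟨P, Q, h, h1⟩
    · exact ⟨Q, P, h.symm, h1⟩
  obtain ⟨b, hb, hbw⟩ := F Q hPQ.oQ hPQ.nQ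
  have hba := (hPQ.symm.ne hb)
  obtain ⟨A, X, hAX, haA⟩ : ∃ A X, CutSep b y A X ∧ a ∈ A := by
    obtain ⟨A, X, h⟩ := aux_cut (hbw y (hPQ.nmem hy))
    rcases h.mem hba.1.symm hay with h1 | h1
    · exact ⟨A, X, h, h1⟩
    · exact ⟨X, A, h.symm, h1⟩
  have hxX : x ∈ X := hPQ.cross hnc hAX hy hb haA
  have hne : (P ∩ X).Nonempty := by
    have hc := hPQ.conn hax (hnc a)
    -- otherwise `{x}` is clopen in `P ∪ {x}`
    obtain ⟨t, ht, ht1, ht2⟩ := hc X {x}ᶜ hAX.oQ isOpen_compl_singleton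
      (by
        intro p hp
        by_cases hpx : p = x
        · subst hpx; exact Or.inl hxX
        · exact Or.inr hpx)
      ⟨x, Or.inr rfl, hxX⟩ ⟨y, Or.inl hy, hxy.symm⟩
    rcases ht with ht | ht
    · exact ⟨t, ht, ht1⟩
    · exact (ht2 ht).elim
  refine ⟨P ∩ X, {x, y}ᶜ ∩ (Q ∪ A), hPQ.oP.inter hAX.oQ,
    (Set.toFinite {x, y}).isClosed.isOpen_compl.inter (hPQ.oQ.union hAX.oP), hne,
    ⟨a, ha, Or.inr haA⟩, ?_, ?_⟩
  · rw [Set.disjoint_left]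
    rintro p ⟨h1, h2⟩ ⟨_, h3 | h3⟩
    · exact hPQ.nmem h1 h3
    · exact hAX.nmem h3 h2
  · ext p
    have i3 : p ∈ P → p ≠ a ∧ p ≠ x := hPQ.ne
    have i6 : p ∈ X → p ≠ b ∧ p ≠ y := hAX.symm.ne
    constructor
    · rintro (⟨h1, h2⟩ | ⟨h1, _⟩)
      · simp [(i3 h1).2, (i6 h2).2]
      · exact h1
    · intro hp
      by_cases hQA : p ∈ Q ∪ A
      · exact Or.inr ⟨hp, hQA⟩
      obtain ⟨hpx, hpy⟩ : p ≠ x ∧ p ≠ y := by simpa [not_or] using hp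
      refine Or.inl ⟨(hPQ.mem ?_ hpx).resolve_right fun h => hQA (Or.inl h),
        (hAX.mem ?_ hpy).resolve_left fun h => hQA (Or.inr h)⟩
      · rintro rfl; exact hQA (Or.inr haA)
      · rintro rfl; exact hQA (Or.inl hb)

/-- existence of non-cut points -/
theorem aux_noncut [T1Space M] [CompactSpace M] [ConnectedSpace M]
    : ∃ x : M, IsPreconnected ({x}ᶜ : Set M) := by
  by_contra hcon
  push Not at hcon
  obtain ⟨c⟩ : Nonempty M := inferInstance
  have hsep : ∀ x : M, ∃ U V : Set M, IsOpen U ∧ IsOpen V ∧ U.Nonempty ∧ Disjoint U V ∧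
      U ∪ V = {x}ᶜ ∧ c ∉ U := by
    intro x
    obtain ⟨P, Q, a, b, nP, d, e, f⟩ :=
      aux_sep (S := ({x}ᶜ : Set M)) isOpen_compl_singleton (hcon x)
    by_cases hc : c ∈ P
    · exact ⟨Q, P, b, a, d, e.symm, by rw [Set.union_comm]; exact f, Set.disjoint_left.1 e hc⟩
    · exact ⟨P, Q, a, b, nP, e, f, hc⟩
  choose U V oU oV nU dUV hUV hcU using hsep
  have hmem : ∀ x p, p ≠ x → p ∈ U x ∨ p ∈ V x := by
    intro x p hp
    have : p ∈ U x ∪ V x := by rw [hUV]; exact hp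
    exact this
  have hxU : ∀ x, x ∉ U x := by
    intro x hx
    have : x ∈ U x ∪ V x := Or.inl hx
    rw [hUV] at this
    exact this rfl
  have hxV : ∀ x, x ∉ V x := by
    intro x hx
    have : x ∈ U x ∪ V x := Or.inr hx
    rw [hUV] at this
    exact this rfl
  have hcl : ∀ x, U x ∪ {x} = (V x)ᶜ := by
    intro x
    ext p
    constructor
    · rintro (hp | hp) hq
      · exact Set.disjoint_left.1 (dUV x) hp hq
      · rw [Set.mem_singleton_iff] at hp; subst hp; exact hxV _ hq
    · intro hp
      by_cases h : p = x
      · exact Or.inr h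
      · exact Or.inl ((hmem x p h).resolve_right hp)
  have hnest : ∀ x q, q ∈ U x → U q ∪ {q} ⊆ U x := by
    intro x q hq
    have hconn : IsPreconnected (V x ∪ {x}) := by
      refine aux_add (S := Set.univ) (w := x) isPreconnected_univ trivial (oV x) (oU x)
        (dUV x).symm ?_
      rw [Set.union_comm, hUV, Set.compl_eq_univ_sdiff]
    have hqV : q ∉ V x := Set.disjoint_left.1 (dUV x) hq
    have hqx : q ≠ x := by rintro rfl; exact hxU _ hq
    have hcx : c ∈ V x ∪ {x} := by
      by_cases h : c = x
      · exact Or.inr h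
      · exact Or.inl ((hmem x c h).resolve_left (hcU x))
    have hcq : c ≠ q := by rintro rfl; exact hcU x hq
    have hsub : V x ∪ {x} ⊆ V q := by
      refine aux_side hconn (oV q) (oU q) (dUV q).symm ?_ hcx ((hmem q c hcq).resolve_left (hcU q))
      rw [Set.union_comm (V q), hUV]
      rintro p (hp | hp) hpq
      · rw [Set.mem_singleton_iff] at hpq; subst hpq; exact hqV hp
      · rw [Set.mem_singleton_iff] at hpq hp; subst hpq; exact hqx hp
    rw [hcl]
    intro p hp
    by_contra hpU
    apply hp
    apply hsub
    by_cases h : p = x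
    · exact Or.inr h
    · exact Or.inl ((hmem x p h).resolve_left hpU)
  have hclosed : ∀ x, IsClosed (U x ∪ {x}) := fun x => by
    rw [hcl]; exact (oV x).isClosed_compl
  obtain ⟨m, hm⟩ := zorn_superset (Set.range fun x => U x ∪ {x}) (by
    intro C hC hchain
    by_cases hne : C.Nonempty
    · have hInter : (⋂₀ C).Nonempty := by
        have : Nonempty C := hne.to_subtype
        refine IsCompact.nonempty_sInter_of_directed_nonempty_isCompact_isClosed ?_ ?_ ?_ ?_
        · intro s hs t ht
          rcases hchain.total hs ht with h | h
          · exact ⟨s, hs, subset_rfl, h⟩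
          · exact ⟨t, ht, h, subset_rfl⟩
        · intro s hs
          obtain ⟨x, rfl⟩ := hC hs
          exact ⟨x, Or.inr rfl⟩
        · intro s hs
          obtain ⟨x, rfl⟩ := hC hs
          exact (hclosed x).isCompact
        · intro s hs
          obtain ⟨x, rfl⟩ := hC hs
          exact hclosed x
      obtain ⟨q, hq⟩ := hInter
      refine ⟨_, ⟨q, rfl⟩, ?_⟩
      intro s hs
      have hqs := hq s hs
      obtain ⟨x, rfl⟩ := hC hs
      rcases hqs with h | h
      · exact (hnest x q h).trans Set.subset_union_left
      · rw [Set.mem_singleton_iff] at h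
        rw [h]
    · rw [Set.not_nonempty_iff_eq_empty] at hne
      subst hne
      exact ⟨_, ⟨c, rfl⟩, by simp⟩)
  obtain ⟨⟨x, rfl⟩, hmin⟩ := hm
  obtain ⟨r, hr⟩ := nU x
  have h1 := hnest x r hr
  have h2 := hmin ⟨r, rfl⟩ (h1.trans Set.subset_union_left)
  exact hxU x (h1 (h2 (Or.inr rfl)))

theorem aux_fun {D : Type} [LinearOrder D] [Countable D] [DenselyOrdered D] [NoMinOrder D]
    [NoMaxOrder D] [Nonempty D] (X Y : D → Set M) (S : Set M)
    (oX : ∀ d, IsOpen (X d)) (oY : ∀ d, IsOpen (Y d))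
    (h1 : ∀ p d e, p ∈ X d → p ∈ Y e → e ≤ d)
    (h2 : ∀ p ∈ S, ∀ d e, d < e → p ∈ Y d ∨ p ∈ X e) :
    ∃ f : M → ℝ, ContinuousOn f S ∧ (∀ p, f p ∈ Set.Icc (-1 : ℝ) 1) ∧
      (∀ d e p q, d < e → p ∈ X d → q ∈ Y e → f p < f q) ∧
      (∀ p, (∀ d, p ∈ X d) → f p = -1) ∧ (∀ p, (∀ d, p ∈ Y d) → f p = 1) := by
  haveI : Nonempty (Set.Ioo (-1 : ℚ) 1) := ⟨⟨0, by norm_num, by norm_num⟩⟩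
  obtain ⟨φ⟩ := Order.iso_of_countable_dense D (Set.Ioo (-1 : ℚ) 1)
  let ψ : D → ℝ := fun d => ((φ d : ℚ) : ℝ)
  have ψlt : ∀ d e, d < e → ψ d < ψ e := by
    intro d e hde
    have : ((φ d : ℚ)) < (φ e : ℚ) := φ.strictMono hde
    exact Rat.cast_lt.2 this
  have ψle : ∀ d e, d ≤ e → ψ d ≤ ψ e := by
    intro d e hde
    have : ((φ d : ℚ)) ≤ (φ e : ℚ) := φ.monotone hde
    exact Rat.cast_le.2 this
  have ψ1 : ∀ d, -1 < ψ d := by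
    intro d
    have : ((-1 : ℚ) : ℝ) < ψ d := Rat.cast_lt.2 (φ d).2.1
    simpa using this
  have ψ2 : ∀ d, ψ d < 1 := by
    intro d
    have : ψ d < ((1 : ℚ) : ℝ) := Rat.cast_lt.2 (φ d).2.2
    simpa using this
  have ψs : ∀ a b : ℝ, -1 ≤ a → b ≤ 1 → a < b → ∃ d, a < ψ d ∧ ψ d < b := by
    intro a b ha hb hab
    obtain ⟨s, hs1, hs2⟩ := exists_rat_btwn hab
    have e1 : (-1 : ℝ) < s := lt_of_le_of_lt ha hs1
    have e2 : (s : ℝ) < 1 := lt_of_lt_of_le hs2 hb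
    refine ⟨φ.symm ⟨s, by exact_mod_cast e1, by exact_mod_cast e2⟩, ?_, ?_⟩ <;> simpa [ψ]
  let T : M → Set ℝ := fun p => insert (-1) {r | ∃ d, p ∈ Y d ∧ r = ψ d}
  have Tb : ∀ p, ∀ r ∈ T p, r ≤ 1 := by
    rintro p r (rfl | ⟨d, _, rfl⟩)
    · norm_num
    · exact (ψ2 d).le
  have Tbdd : ∀ p, BddAbove (T p) := fun p => ⟨1, Tb p⟩
  have Tne : ∀ p, (T p).Nonempty := fun p => ⟨-1, Or.inl rfl⟩
  let f : M → ℝ := fun p => sSup (T p)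
  have fge : ∀ p, -1 ≤ f p := fun p => le_csSup (Tbdd p) (Or.inl rfl)
  have fle : ∀ p, f p ≤ 1 := fun p => csSup_le (Tne p) (Tb p)
  have fY : ∀ p d, p ∈ Y d → ψ d ≤ f p := fun p d h => le_csSup (Tbdd p) (Or.inr ⟨d, h, rfl⟩)
  have fX : ∀ p d, p ∈ X d → f p ≤ ψ d := by
    intro p d h
    refine csSup_le (Tne p) ?_
    rintro r (rfl | ⟨e, he, rfl⟩)
    · exact (ψ1 d).le
    · exact ψle _ _ (h1 p d e h he)
  refine ⟨f, ?_, fun p => ⟨fge p, fle p⟩, ?_, ?_, ?_⟩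
  · intro p hp
    refine ContinuousAt.continuousWithinAt ?_
    refine tendsto_order.2 ⟨?_, ?_⟩
    · intro a ha
      obtain ⟨s, hs, has⟩ := exists_lt_of_lt_csSup (Tne p) ha
      rcases hs with rfl | ⟨d, hd, rfl⟩
      · exact Eventually.of_forall fun q => has.trans_le (fge q)
      · filter_upwards [(oY d).mem_nhds hd] with q hq
        exact has.trans_le (fY q d hq)
    · intro a ha
      by_cases h : 1 < a
      · exact Eventually.of_forall fun q => (fle q).trans_lt h
      push Not at h
      obtain ⟨d, hd1, hd2⟩ := ψs (f p) a (fge p) h ha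
      obtain ⟨e, he1, he2⟩ := ψs (ψ d) a (ψ1 d).le h hd2
      have hde : d < e := by
        by_contra hh
        exact absurd (ψle _ _ (not_lt.1 hh)) (not_le.2 he1)
      rcases h2 p hp d e hde with h3 | h3
      · exact absurd (fY p d h3) (not_le.2 hd1)
      · filter_upwards [(oX e).mem_nhds h3] with q hq
        exact (fX q e hq).trans_lt he2
  · intro d e p q hde hp hq
    exact (fX p d hp).trans_lt ((ψlt d e hde).trans_le (fY q e hq))
  · intro p hp
    by_contra hne
    have hlt : -1 < f p := lt_of_le_of_ne (fge p) (Ne.symm hne)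
    obtain ⟨d, _, hd⟩ := ψs (-1) (f p) le_rfl (fle p) hlt
    exact absurd (fX p d (hp d)) (not_le.2 hd)
  · intro p hp
    by_contra hne
    have hlt : f p < 1 := lt_of_le_of_ne (fle p) hne
    obtain ⟨d, hd, _⟩ := ψs (f p) 1 (fge p) le_rfl hlt
    exact absurd (fY p d (hp d)) (not_le.2 hd)

theorem aux_arc [T1Space M] [TopologicalSpace.SeparableSpace M]
    (hnc : ∀ x : M, IsPreconnected ({x}ᶜ : Set M))
    (hall : ∀ x y : M, x ≠ y → ∃ P Q, CutSep x y P Q)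
    {x y : M} (hxy : x ≠ y) {P Q : Set M} (h : CutSep x y P Q) :
    ∃ f : M → ℝ, ContinuousOn f (P ∪ {x, y}) ∧ Set.InjOn f (P ∪ {x, y}) ∧ f x = -1 ∧ f y = 1 ∧
      ∀ p, f p ∈ Set.Icc (-1 : ℝ) 1 := by
  obtain ⟨z, hz⟩ := h.nQ
  have hzx := h.symm.ne hz
  have hzP : z ∉ P := h.symm.nmem hz
  have hex : ∀ d : P, ∃ X Y, CutSep z d.1 X Y ∧ x ∈ X ∧ y ∈ Y := by
    intro d
    have hzd : z ≠ d.1 := by intro e; exact hzP (e ▸ d.2)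
    have hd := h.ne d.2
    obtain ⟨X, Y, hs, hx⟩ : ∃ X Y, CutSep z d.1 X Y ∧ x ∈ X := by
      obtain ⟨X, Y, hs⟩ := hall z d.1 hzd
      rcases hs.mem hzx.1.symm hd.1.symm with h1 | h1
      · exact ⟨X, Y, hs, h1⟩
      · exact ⟨Y, X, hs.symm, h1⟩
    exact ⟨X, Y, hs, hx, h.cross hnc hs d.2 hz hx⟩
  choose X Y hXY hxX hyY using hex
  have hIc : IsPreconnected (P ∪ {x, y}) := h.conn2 hxy (hnc _) (hnc _)
  have hzI : ∀ p ∈ P ∪ {x, y}, p ≠ z := by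
    rintro p (hp | rfl | hp) rfl
    · exact hzP hp
    · exact hzx.1 rfl
    · exact hzx.2 hp
  have hzd : ∀ d : P, z ≠ d.1 := fun d e => hzP (e ▸ d.2)
  -- nesting
  have nest1 : ∀ d e : P, e.1 ∈ Y d → X d ∪ {d.1} ⊆ X e := by
    intro d e hed
    have hc := (hXY d).conn (hzd d) (hnc z)
    refine aux_side hc (hXY e).oP (hXY e).oQ (hXY e).dis ?_ (Or.inl (hxX d)) (hxX e)
    rw [(hXY e).un]
    have hne := (hXY d).symm.ne hed
    rintro p (hp | hp)
    · have i1 := (hXY d).ne hp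
      have i2 : p ≠ e.1 := by rintro rfl; exact (hXY d).nmem hp hed
      simp [i1.1, i2]
    · rw [Set.mem_singleton_iff] at hp
      subst hp
      simp [(hzd d).symm, hne.2.symm]
  have nest2 : ∀ d e : P, e.1 ∈ X d → Y d ∪ {d.1} ⊆ Y e := by
    intro d e hed
    have hc := (hXY d).symm.conn (hzd d) (hnc z)
    refine aux_side hc (hXY e).oQ (hXY e).oP (hXY e).dis.symm ?_ (Or.inl (hyY d)) (hyY e)
    rw [(hXY e).symm.un]
    have hne := (hXY d).ne hed
    rintro p (hp | hp)
    · have i1 := (hXY d).symm.ne hp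
      have i2 : p ≠ e.1 := by rintro rfl; exact (hXY d).nmem hed hp
      simp [i1.1, i2]
    · rw [Set.mem_singleton_iff] at hp
      subst hp
      simp [(hzd d).symm, hne.2.symm]
  have flip : ∀ d e : P, d.1 ∈ X e → e.1 ∈ Y d := fun d e hh => nest2 e d hh (Or.inr rfl)
  have mono : ∀ d e : P, d.1 ∈ X e → X d ⊆ X e := fun d e hh =>
    Set.subset_union_left.trans (nest1 d e (flip d e hh))
  obtain ⟨t, htc, htd⟩ := TopologicalSpace.exists_countable_dense M
  let D := {d : P // d.1 ∈ t}
  have hDc : Countable D := by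
    have : Function.Injective (fun d : D => (⟨d.1.1, d.2⟩ : t)) := by
      intro a b hab
      apply Subtype.ext
      apply Subtype.ext
      exact congrArg (fun q : t => q.1) hab
    have := htc.to_subtype
    exact Function.Injective.countable ‹Function.Injective _›
  have hDd : ∀ W : Set M, IsOpen W → (W ∩ P).Nonempty → ∃ d : D, d.1.1 ∈ W := by
    intro W hW hne
    obtain ⟨p, hp, hpt⟩ := htd.exists_mem_open (hW.inter h.oP) hne
    exact ⟨⟨⟨p, hpt.2⟩, hp⟩, hpt.1⟩
  let r : D → D → Prop := fun a b => a.1.1 ∈ X b.1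
  have hirr : ∀ d : P, d.1 ∉ X d := fun d hd => ((hXY d).ne hd).2 rfl
  have hirr' : ∀ d : P, d.1 ∉ Y d := fun d hd => ((hXY d).symm.ne hd).2 rfl
  have hso : IsStrictTotalOrder D r :=
    { irrefl := fun a ha => hirr a.1 ha
      trans := fun a b c hab hbc => mono b.1 c.1 hbc hab
      trichotomous := by
        intro a b hab hba
        by_contra hne
        have hne' : a.1.1 ≠ b.1.1 := fun e => hne (Subtype.ext (Subtype.ext e))
        rcases (hXY b.1).mem (hzd a.1).symm hne' with h1 | h1
        · exact hab h1
        · exact hba (nest1 b.1 a.1 h1 (Or.inr rfl)) }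
  classical
  letI : LinearOrder D := linearOrderOfSTO r
  have hlt : ∀ a b : D, a < b ↔ a.1.1 ∈ X b.1 := fun a b => Iff.rfl
  -- betweenness
  have btw : ∀ d e : P, d.1 ∈ X e → (Y d ∩ X e ∩ P).Nonempty := by
    intro d e hde
    obtain ⟨q, hq, hq1, hq2⟩ := hIc (Y d) (X e) (hXY d).oQ (hXY e).oP (by
      intro p hp
      by_cases hpd : p = d.1
      · subst hpd; exact Or.inr hde
      rcases (hXY d).mem (hzI p hp) hpd with h1 | h1
      · exact Or.inr (mono d e hde h1)
      · exact Or.inl h1) ⟨y, by simp, hyY d⟩ ⟨x, by simp, hxX e⟩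
    refine ⟨q, ⟨hq1, hq2⟩, ?_⟩
    rcases hq with hq | rfl | hq
    · exact hq
    · exact ((hXY d).nmem (hxX d) hq1).elim
    · rw [Set.mem_singleton_iff] at hq
      subst hq
      exact ((hXY e).nmem hq2 (hyY e)).elim
  have btwx : ∀ e : P, (X e ∩ P).Nonempty := by
    intro e
    obtain ⟨q, hq, hq1, hq2⟩ := hIc {x}ᶜ (X e) isOpen_compl_singleton (hXY e).oP (by
      intro p hp
      by_cases hpd : p = x
      · subst hpd; exact Or.inr (hxX e)
      · exact Or.inl hpd) ⟨y, by simp, hxy.symm⟩ ⟨x, by simp, hxX e⟩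
    refine ⟨q, hq2, ?_⟩
    rcases hq with hq | hq | hq
    · exact hq
    · exact (hq1 hq).elim
    · rw [Set.mem_singleton_iff] at hq
      subst hq
      exact ((hXY e).nmem hq2 (hyY e)).elim
  have btwy : ∀ d : P, (Y d ∩ P).Nonempty := by
    intro d
    obtain ⟨q, hq, hq1, hq2⟩ := hIc (Y d) {y}ᶜ (hXY d).oQ isOpen_compl_singleton (by
      intro p hp
      by_cases hpd : p = y
      · subst hpd; exact Or.inl (hyY d)
      · exact Or.inr hpd) ⟨y, by simp, hyY d⟩ ⟨x, by simp, hxy⟩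
    refine ⟨q, hq1, ?_⟩
    rcases hq with hq | rfl | hq
    · exact hq
    · exact ((hXY d).nmem (hxX d) hq1).elim
    · exact (hq2 hq).elim
  have i1 : DenselyOrdered D := by
    refine ⟨fun a b hab => ?_⟩
    obtain ⟨c, hc⟩ := hDd (Y a.1 ∩ X b.1) ((hXY a.1).oQ.inter (hXY b.1).oP) (btw a.1 b.1 hab)
    exact ⟨c, nest1 a.1 c.1 hc.1 (Or.inr rfl), hc.2⟩
  have i2 : NoMinOrder D := by
    refine ⟨fun a => ?_⟩
    obtain ⟨c, hc⟩ := hDd (X a.1) (hXY a.1).oP (btwx a.1)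
    exact ⟨c, hc⟩
  have i3 : NoMaxOrder D := by
    refine ⟨fun a => ?_⟩
    obtain ⟨c, hc⟩ := hDd (Y a.1) (hXY a.1).oQ (btwy a.1)
    exact ⟨c, nest1 a.1 c.1 hc (Or.inr rfl)⟩
  have i4 : Nonempty D := by
    obtain ⟨c, _⟩ := hDd Set.univ isOpen_univ (by simpa using h.nP)
    exact ⟨c⟩
  obtain ⟨f, fc, fI, flt, fx, fy⟩ := aux_fun (fun d : D => X d.1) (fun d : D => Y d.1)
    (P ∪ {x, y}) (fun d => (hXY d.1).oP) (fun d => (hXY d.1).oQ)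
    (by
      intro p d e hd he
      by_contra hlt'
      exact (hXY e.1).nmem (mono d.1 e.1 (not_le.1 hlt') hd) he)
    (by
      intro p hp d e hde
      by_cases hpd : p = d.1.1
      · subst hpd; exact Or.inr hde
      rcases (hXY d.1).mem (hzI p hp) hpd with h1 | h1
      · exact Or.inr (mono d.1 e.1 hde h1)
      · exact Or.inl h1)
  have fx' : f x = -1 := fx x fun d => hxX d.1
  have fy' : f y = 1 := fy y fun d => hyY d.1
  -- strict monotonicity
  have key : ∀ p q : P, p.1 ∈ X q → f p < f q := by
    intro p q hpq
    obtain ⟨d, hd⟩ := hDd (Y p ∩ X q) ((hXY p).oQ.inter (hXY q).oP) (btw p q hpq)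
    obtain ⟨e, he⟩ := hDd (Y d.1 ∩ X q) ((hXY d.1).oQ.inter (hXY q).oP) (btw d.1 q hd.2)
    exact flt d e p q (nest1 d.1 e.1 he.1 (Or.inr rfl)) (nest1 p d.1 hd.1 (Or.inr rfl))
      (flip e.1 q he.2)
  have keyx : ∀ q : P, -1 < f q := by
    intro q
    obtain ⟨d, hd⟩ := hDd (X q) (hXY q).oP (btwx q)
    obtain ⟨e, he⟩ := exists_lt d
    rw [← fx']
    exact flt e d x q he (hxX e.1) (flip d.1 q hd)
  have keyy : ∀ q : P, f q < 1 := by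
    intro q
    obtain ⟨d, hd⟩ := hDd (Y q) (hXY q).oQ (btwy q)
    obtain ⟨e, he⟩ := exists_gt d
    rw [← fy']
    exact flt d e q y he (nest1 q d.1 hd (Or.inr rfl)) (hyY e.1)
  refine ⟨f, fc, ?_, fx', fy', fI⟩
  rintro p hp q hq hpq
  by_contra hne
  rcases hp with hp | rfl | hp
  · have a1 := keyx ⟨p, hp⟩
    have a2 := keyy ⟨p, hp⟩
    rcases hq with hq | rfl | hq
    · rcases (hXY ⟨q, hq⟩).mem (hzd ⟨p, hp⟩).symm hne with h1 | h1
      · exact absurd hpq (key ⟨p, hp⟩ ⟨q, hq⟩ h1).ne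
      · exact absurd hpq (key ⟨q, hq⟩ ⟨p, hp⟩ (nest1 ⟨q, hq⟩ ⟨p, hp⟩ h1 (Or.inr rfl))).ne'
    · simp only at a1 a2; linarith
    · rw [Set.mem_singleton_iff] at hq
      subst hq
      simp only at a1 a2; linarith
  · rcases hq with hq | rfl | hq
    · have a1 := keyx ⟨q, hq⟩
      simp only at a1; linarith
    · exact hne rfl
    · rw [Set.mem_singleton_iff] at hq
      subst hq
      linarith
  · rw [Set.mem_singleton_iff] at hp
    subst hp
    rcases hq with hq | rfl | hq
    · have a1 := keyy ⟨q, hq⟩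
      simp only at a1; linarith
    · linarith
    · exact hne hq.symm

theorem aux_circle [T2Space M] [CompactSpace M] [TopologicalSpace.SeparableSpace M]
    (hnc : ∀ x : M, IsPreconnected ({x}ᶜ : Set M))
    (hall : ∀ x y : M, x ≠ y → ∃ P Q, CutSep x y P Q)
    {x y : M} (hxy : x ≠ y) : Nonempty (M ≃ₜ Circle1) := by
  obtain ⟨P, Q, h⟩ := hall x y hxy
  obtain ⟨f, fc, fi, fx, fy, fI⟩ := aux_arc hnc hall hxy h
  obtain ⟨g, gc, gi, gx, gy, gI⟩ := aux_arc hnc hall hxy h.symm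
  have hPs : IsPreconnected (P ∪ {x, y}) := h.conn2 hxy (hnc _) (hnc _)
  have hQs : IsPreconnected (Q ∪ {x, y}) := h.symm.conn2 hxy (hnc _) (hnc _)
  have cov : ∀ p, p ∈ P ∪ {x, y} ∨ p ∈ Q ∪ {x, y} := by
    intro p
    by_cases h1 : p = x
    · simp [h1]
    by_cases h2 : p = y
    · simp [h2]
    rcases h.mem h1 h2 with h3 | h3
    · exact Or.inl (Or.inl h3)
    · exact Or.inr (Or.inl h3)
  have both : ∀ p, p ∈ P ∪ {x, y} → p ∈ Q ∪ {x, y} → p = x ∨ p = y := by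
    rintro p (hp | hp) (hq | hq)
    · exact (h.nmem hp hq).elim
    · exact hq
    · exact hp
    · exact hp
  have clP : IsClosed (P ∪ {x, y}) := by
    have : P ∪ {x, y} = Qᶜ := by
      ext p
      constructor
      · intro hp hq
        rcases both p hp (Or.inl hq) with e | e
        · exact (h.symm.ne hq).1 e
        · exact (h.symm.ne hq).2 e
      · intro hp
        rcases cov p with h1 | h1 | h1
        · exact h1
        · exact (hp h1).elim
        · exact Or.inr h1
    rw [this]; exact h.oQ.isClosed_compl
  have clQ : IsClosed (Q ∪ {x, y}) := by
    have : Q ∪ {x, y} = Pᶜ := by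
      ext p
      constructor
      · intro hp hq
        rcases both p (Or.inl hq) hp with e | e
        · exact (h.ne hq).1 e
        · exact (h.ne hq).2 e
      · intro hp
        rcases cov p with (h1 | h1) | h1
        · exact (hp h1).elim
        · exact Or.inr h1
        · exact h1
    rw [this]; exact h.oP.isClosed_compl
  classical
  let u : M → ℝ := fun p => if p ∈ P ∪ {x, y} then f p else g p
  let v : M → ℝ := fun p => if p ∈ P ∪ {x, y} then √(1 - f p ^ 2) else -√(1 - g p ^ 2)
  have uP : ∀ p ∈ P ∪ {x, y}, u p = f p := fun p hp => if_pos hp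
  have vP : ∀ p ∈ P ∪ {x, y}, v p = √(1 - f p ^ 2) := fun p hp => if_pos hp
  have uQ : ∀ p ∈ Q ∪ {x, y}, u p = g p := by
    intro p hp
    by_cases hp' : p ∈ P ∪ {x, y}
    · rw [uP p hp']
      rcases both p hp' hp with rfl | rfl
      · rw [fx, gx]
      · rw [fy, gy]
    · exact if_neg hp'
  have vQ : ∀ p ∈ Q ∪ {x, y}, v p = -√(1 - g p ^ 2) := by
    intro p hp
    by_cases hp' : p ∈ P ∪ {x, y}
    · rw [vP p hp']
      rcases both p hp' hp with rfl | rfl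
      · rw [fx, gx]; norm_num
      · rw [fy, gy]; norm_num
    · exact if_neg hp'
  have huniv : (Set.univ : Set M) = (P ∪ {x, y}) ∪ (Q ∪ {x, y}) := by
    exact (Set.eq_univ_of_forall cov).symm
  have uc : Continuous u := by
    rw [← continuousOn_univ, huniv]
    exact (fc.congr uP).union_of_isClosed (gc.congr uQ) clP clQ
  have vc : Continuous v := by
    rw [← continuousOn_univ, huniv]
    refine ContinuousOn.union_of_isClosed (ContinuousOn.congr ?_ vP) (ContinuousOn.congr ?_ vQ)
      clP clQ
    · exact (continuousOn_const.sub (fc.pow 2)).sqrt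
    · exact (continuousOn_const.sub (gc.pow 2)).sqrt.neg
  have sq : ∀ a : ℝ, a ∈ Set.Icc (-1 : ℝ) 1 → 0 ≤ 1 - a ^ 2 := by
    rintro a ⟨h1, h2⟩
    nlinarith
  have uv : ∀ p, u p ^ 2 + v p ^ 2 = 1 := by
    intro p
    rcases cov p with hp | hp
    · rw [uP p hp, vP p hp, Real.sq_sqrt (sq _ (fI p))]; ring
    · rw [uQ p hp, vQ p hp, neg_sq, Real.sq_sqrt (sq _ (gI p))]; ring
  let F : M → Circle1 := fun p => ⟨!₂[u p, v p], by
    rw [mem_sphere_zero_iff_norm, EuclideanSpace.norm_eq, Real.sqrt_eq_one]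
    simpa [Fin.sum_univ_two] using uv p⟩
  have Fc : Continuous F := by
    refine Continuous.subtype_mk ?_ _
    refine (PiLp.continuous_toLp 2 _).comp ?_
    refine continuous_pi fun i => ?_
    fin_cases i
    · exact uc
    · exact vc
  have Fu : ∀ p q, F p = F q → u p = u q ∧ v p = v q := by
    intro p q hpq
    have hh : (!₂[u p, v p] : EuclideanSpace ℝ (Fin 2)) = !₂[u q, v q] := congrArg Subtype.val hpq
    constructor
    · simpa using congrArg (fun w : EuclideanSpace ℝ (Fin 2) => w 0) hh
    · simpa using congrArg (fun w : EuclideanSpace ℝ (Fin 2) => w 1) hh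
  have mixed : ∀ p q, p ∈ P ∪ {x, y} → q ∈ Q ∪ {x, y} → u p = u q → v p = v q → p = q := by
    intro p q hp hq e1 e2
    have e3 : √(1 - f p ^ 2) = 0 := by
      have a := vP p hp
      have b := vQ q hq
      have c := Real.sqrt_nonneg (1 - f p ^ 2)
      have d := Real.sqrt_nonneg (1 - g q ^ 2)
      linarith
    rw [Real.sqrt_eq_zero (sq _ (fI p))] at e3
    have e4 : (f p - 1) * (f p + 1) = 0 := by linarith
    rw [uP p hp, uQ q hq] at e1
    rcases mul_eq_zero.1 e4 with e | e
    · have hf : f p = 1 := by linarith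
      have hpy : p = y := fi hp (by simp) (by rw [hf, fy])
      have hqy : q = y := gi hq (by simp) (by rw [← e1, hf, gy])
      rw [hpy, hqy]
    · have hf : f p = -1 := by linarith
      have hpy : p = x := fi hp (by simp) (by rw [hf, fx])
      have hqy : q = x := gi hq (by simp) (by rw [← e1, hf, gx])
      rw [hpy, hqy]
  have Finj : Function.Injective F := by
    intro p q hpq
    obtain ⟨e1, e2⟩ := Fu p q hpq
    rcases cov p with hp | hp <;> rcases cov q with hq | hq
    · rw [uP p hp, uP q hq] at e1
      exact fi hp hq e1
    · exact mixed p q hp hq e1 e2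
    · exact (mixed q p hq hp e1.symm e2.symm).symm
    · rw [uQ p hp, uQ q hq] at e1
      exact gi hp hq e1
  have Fsurj : Function.Surjective F := by
    rintro ⟨w, hw⟩
    have hw' : w 0 ^ 2 + w 1 ^ 2 = 1 := by
      rw [mem_sphere_zero_iff_norm, EuclideanSpace.norm_eq, Real.sqrt_eq_one] at hw
      simpa [Fin.sum_univ_two] using hw
    have hI : w 0 ∈ Set.Icc (-1 : ℝ) 1 := by
      constructor <;> nlinarith [sq_nonneg (w 1)]
    suffices ∃ p, u p = w 0 ∧ v p = w 1 by
      obtain ⟨p, h1, h2⟩ := this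
      refine ⟨p, Subtype.ext ?_⟩
      ext i
      fin_cases i
      · simpa [F] using h1
      · simpa [F] using h2
    rcases le_total 0 (w 1) with h0 | h0
    · have := hPs.intermediate_value (show x ∈ P ∪ {x, y} by simp) (show y ∈ P ∪ {x, y} by simp) fc
      rw [fx, fy] at this
      obtain ⟨p, hp, hpw⟩ := this hI
      refine ⟨p, by rw [uP p hp, hpw], ?_⟩
      rw [vP p hp, hpw, show 1 - w 0 ^ 2 = (w 1) ^ 2 by linarith, Real.sqrt_sq h0]
    · have := hQs.intermediate_value (show x ∈ Q ∪ {x, y} by simp) (show y ∈ Q ∪ {x, y} by simp) gc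
      rw [gx, gy] at this
      obtain ⟨p, hp, hpw⟩ := this hI
      refine ⟨p, by rw [uQ p hp, hpw], ?_⟩
      rw [vQ p hp, hpw]
      have : √(1 - w 0 ^ 2) = - w 1 := by
        rw [show 1 - w 0 ^ 2 = (- w 1) ^ 2 by linarith, Real.sqrt_sq (by linarith)]
      linarith
  exact ⟨Fc.homeoOfEquivCompactToT2 (f := Equiv.ofBijective F ⟨Finj, Fsurj⟩)⟩

theorem aux_dyn {Δ : Type} [Group Δ] [MulAction Δ M] [CompactSpace M] [Infinite Δ]
    (hconv : IsConvergenceAction Δ M) (hmin : ∀ x : M, Dense (MulAction.orbit Δ x))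
    (U N : Set M) (hU : IsOpen U) (hUn : U.Nonempty) (hN : IsOpen N) (hNn : N.Nonempty) :
    ∃ g : Δ, ∀ p, p ∉ U → g • p ∈ N := by
  obtain ⟨φ, _, a, b, hab⟩ := hconv.2 (Infinite.natEmbedding Δ) (Infinite.natEmbedding Δ).injective
  obtain ⟨_, ⟨h, rfl⟩, hh⟩ := (hmin a).exists_mem_open hN hNn
  obtain ⟨_, ⟨k, rfl⟩, hk⟩ := (hmin b).exists_mem_open hU hUn
  have hK : IsClosed ((fun p : M => k • p) ⁻¹' (Uᶜ)) := hU.isClosed_compl.preimage (hconv.1 k)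
  have hV : (fun p : M => h • p) ⁻¹' N ∈ 𝓝 a := (hN.preimage (hconv.1 h)).mem_nhds hh
  obtain ⟨n, hn⟩ := (hab _ hK.isCompact (fun hb => hb hk) _ hV).exists
  refine ⟨h * (Infinite.natEmbedding Δ (φ n)) * k⁻¹, fun p hp => ?_⟩
  have := hn (k⁻¹ • p) (by simpa using hp)
  simpa [mul_smul] using this

end Helpers

/-- **Lemma (dense non-cut pairs).**
If `(Δ, M)` is a uniform boundary pair with `M` connected and not homeomorphic to the circle,
and the action of `Δ` on `M` is minimal, then there is a point `z ∈ M` such that the set of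
`w ≠ z` with `M ∖ {z, w}` connected is dense in `M`. -/
theorem dense_non_cut_pairs
    {Δ M : Type} [Group Δ] [TopologicalSpace M] [MulAction Δ M]
    (hBP : IsBoundaryPair Δ M)
    (huniform : ∀ x : M, IsConicalLimitPoint Δ x)
    (hconn : ConnectedSpace M) (hnotcircle : IsEmpty (M ≃ₜ Circle1))
    (hminimal : ∀ x : M, Dense (MulAction.orbit Δ x)) :
    ∃ z : M, Dense {w : M | w ≠ z ∧ IsConnected ({z, w}ᶜ : Set M)} := by
  have hcomp := hBP.compact
  have hmet := hBP.metrizable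
  have hperf := hBP.perfect
  have hconv := hBP.conv
  letI : MetricSpace M := TopologicalSpace.metrizableSpaceMetric M
  have hinfU : ∀ U : Set M, IsOpen U → U.Nonempty → U.Infinite := by
    rintro U hU ⟨x, hx⟩
    have := hperf x
    exact infinite_of_mem_nhds x (hU.mem_nhds hx)
  have hminus : ∀ (U : Set M) (T : Set M), IsOpen U → U.Nonempty → T.Finite → (U \ T).Nonempty :=
    fun U T hU hne hT => ((hinfU U hU hne).sdiff hT).nonempty
  have hpf : ∀ x y : M, (({x, y}ᶜ : Set M)).Nonempty := by
    intro x y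
    rw [Set.compl_eq_univ_sdiff]
    exact hminus _ _ isOpen_univ Set.univ_nonempty (Set.toFinite _)
  obtain ⟨o⟩ : Nonempty M := inferInstance
  have hinf : Infinite Δ := by
    by_contra hfin
    rw [not_infinite_iff_finite] at hfin
    have h1 : (MulAction.orbit Δ o).Finite := Set.finite_range _
    have h2 : MulAction.orbit Δ o = Set.univ := by
      rw [← h1.isClosed.closure_eq]; exact (hminimal o).closure_eq
    rw [h2] at h1
    exact hinfU Set.univ isOpen_univ ⟨o, trivial⟩ h1
  -- homeomorphisms
  let T : Δ → (M ≃ₜ M) := fun g =>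
    { toFun := fun p => g • p
      invFun := fun p => g⁻¹ • p
      left_inv := fun p => by simp
      right_inv := fun p => by simp
      continuous_toFun := hconv.1 g
      continuous_invFun := hconv.1 g⁻¹ }
  have hTp : ∀ (g : Δ) (S : Set M), IsPreconnected (Set.image (T g) S) ↔ IsPreconnected S :=
    fun g S => (T g).isPreconnected_image
  by_cases hcut : ∃ c : M, ¬ IsPreconnected ({c}ᶜ : Set M)
  · obtain ⟨c, hc⟩ := hcut
    obtain ⟨A, B, oA, oB, nA, nB, dAB, eAB⟩ := aux_sep isOpen_compl_singleton hc
    obtain ⟨z, hz⟩ := aux_noncut (M := M)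
    have hncd : ∀ U : Set M, IsOpen U → U.Nonempty →
        ∃ w ∈ U, IsPreconnected ({w}ᶜ : Set M) := by
      intro U hU hne
      obtain ⟨_, ⟨g, rfl⟩, hg⟩ := (hminimal z).exists_mem_open hU hne
      refine ⟨_, hg, ?_⟩
      have := (hTp g {z}ᶜ).2 hz
      rw [Set.image_compl_eq (T g).bijective, Set.image_singleton] at this
      exact this
    refine ⟨z, ?_⟩
    rw [dense_iff_inter_open]
    intro U hU hne
    obtain ⟨g, hg⟩ := aux_dyn hconv hminimal A (U \ {z}) oA nA
      (hU.sdiff isClosed_singleton) (hminus U {z} hU hne (Set.toFinite _))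
    have hBA : ∀ p ∈ B, p ∉ A := fun p hp hp' => Set.disjoint_left.1 dAB hp' hp
    have hcA : c ∉ A := by
      intro h
      have : c ∈ A ∪ B := Or.inl h
      rw [eAB] at this
      exact this rfl
    have hcov : ∀ p, p ≠ c → p ∈ A ∨ p ∈ B := by
      intro p hp
      have : p ∈ A ∪ B := by rw [eAB]; exact hp
      exact this
    have oA' : IsOpen (Set.image (T g) A) := (T g).isOpenMap _ oA
    have oB' : IsOpen (Set.image (T g) B) := (T g).isOpenMap _ oB
    have dAB' : Disjoint (Set.image (T g) A) (Set.image (T g) B) :=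
      (Set.disjoint_image_iff (T g).injective).2 dAB
    have eAB' : Set.image (T g) A ∪ Set.image (T g) B = {g • c}ᶜ := by
      rw [← Set.image_union, eAB, Set.image_compl_eq (T g).bijective, Set.image_singleton]
      rfl
    obtain ⟨w, hwB, hw⟩ := hncd _ oB' (nB.image _)
    have hBU : ∀ p ∈ Set.image (T g) B, p ∈ U ∧ p ≠ z := by
      rintro _ ⟨p, hp, rfl⟩
      exact hg p (hBA p hp)
    have hzc : z ≠ g • c := fun e => (hg c hcA).2 e.symm
    have hzA : z ∈ Set.image (T g) A := by
      have : z ∈ Set.image (T g) A ∪ Set.image (T g) B := by rw [eAB']; exact hzc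
      exact this.resolve_right fun h => (hBU z h).2 rfl
    have hwz : w ≠ z := (hBU w hwB).2
    have hwc : w ≠ g • c := by
      have : w ∈ Set.image (T g) A ∪ Set.image (T g) B := Or.inr hwB
      rw [eAB'] at this
      exact this
    refine ⟨w, (hBU w hwB).1, hwz, hpf z w, ?_⟩
    by_contra hsep
    obtain ⟨P, Q, hPQ, hcP⟩ : ∃ P Q, CutSep z w P Q ∧ g • c ∈ P := by
      obtain ⟨P, Q, h⟩ := aux_cut hsep
      rcases h.mem hzc.symm hwc.symm with h1 | h1
      · exact ⟨P, Q, h, h1⟩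
      · exact ⟨Q, P, h.symm, h1⟩
    have hQ := hPQ.symm.conn2 hwz.symm hz hw
    have hsub : Q ∪ {z, w} ⊆ Set.image (T g) A ∪ Set.image (T g) B := by
      rw [eAB']
      rintro p (hp | rfl | hp) hpc
      · rw [Set.mem_singleton_iff] at hpc
        subst hpc
        exact hPQ.nmem hcP hp
      · exact hzc hpc
      · rw [Set.mem_singleton_iff] at hp hpc
        exact hwc (hp.symm.trans hpc)
    have := aux_side hQ oA' oB' dAB' hsub (x := z) (by simp) hzA
      (show w ∈ Q ∪ {z, w} by simp)
    exact Set.disjoint_left.1 dAB' this hwB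
  · push Not at hcut
    by_contra hno
    push Not at hno
    have F : ∀ N : Set M, IsOpen N → N.Nonempty → ∃ z ∈ N, ∀ w, w ∉ N →
        ¬ IsPreconnected ({z, w}ᶜ : Set M) := by
      intro N hN hNn
      have ho := hno o
      rw [dense_iff_inter_open] at ho
      push Not at ho
      obtain ⟨U, hU, hUn, hUe⟩ := ho
      obtain ⟨g, hg⟩ := aux_dyn hconv hminimal (U \ {o}) N
        (hU.sdiff isClosed_singleton) (hminus U {o} hU hUn (Set.toFinite _)) hN hNn
      refine ⟨g • o, hg o (fun h => h.2 rfl), fun w hw hp => ?_⟩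
      have hw' : g⁻¹ • w ∈ U \ {o} := by
        by_contra hcon
        have := hg _ hcon
        rw [smul_inv_smul] at this
        exact hw this
      have : g⁻¹ • w ∈ U ∩ {w : M | w ≠ o ∧ IsConnected ({o, w}ᶜ : Set M)} := by
        refine ⟨hw'.1, hw'.2, hpf _ _, ?_⟩
        rw [← hTp g, Set.image_compl_eq (T g).bijective, Set.image_pair]
        have e : T g (g⁻¹ • w) = w := smul_inv_smul g w
        rw [e]
        exact hp
      rw [hUe] at this
      exact this
    have hall := aux_allcut hcut hpf F
    obtain ⟨y, hy⟩ := hpf o o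
    have hoy : o ≠ y := by
      rintro rfl
      simp at hy
    obtain ⟨e⟩ := aux_circle hcut hall hoy
    exact hnotcircle.elim e
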